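/- Let z, z' ∈ (ℝ²)⁵ and suppose there exist real scalars a, b such that z'₁ = a·z₁ and z'₅ = b·z₁ (this holds in particular at frameworks where z₅ is parallel to z₁ and z'₁, z'₅ lie in the span of z₁ and z₅). Then the 5×5 matrix J = D(z)·A_e^{(2)}·D(z')ᵀ is singular: det J = 0. Hence the Jacobian of the 2-cycles dynamics is degenerate (has corank at least 1) at frameworks with z₁ parallel to z₅. -/

import Mathlib

open Matrix

/-- The edge-adjacency matrix of the 2-cycles. -/
def Ae : Matrix (Fin 5) (Fin 5) ℝ :=
  !![-1, 1, 0, 0, -1;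
      0, -1, 1, 0, 0;
      1, 0, -1, 0, 1;
      0, 0, 1, -1, 0;
     -1, 0, 0, 1, -1]

/-- `A_e^{(2)} = A_e ⊗ I₂`, the Kronecker product with the 2×2 identity. -/
noncomputable def Ae2 : Matrix (Fin 5 × Fin 2) (Fin 5 × Fin 2) ℝ :=
  Matrix.kroneckerMap (· * ·) Ae (1 : Matrix (Fin 2) (Fin 2) ℝ)

/-- `D(z)`: the 5×10 block-diagonal matrix whose `i`-th diagonal block is the row
vector `zᵢᵀ`. -/
def Dmat (z : Fin 5 → Fin 2 → ℝ) : Matrix (Fin 5) (Fin 5 × Fin 2) ℝ :=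
  Matrix.of fun i p => if p.1 = i then z i p.2 else 0

/-! The entries of the Jacobian are `Jᵢⱼ = (A_e)ᵢⱼ (zᵢ · z'ⱼ)`, and the first and last columns of
`A_e` coincide. If `z'₁ = a u` and `z'₅ = b u` for some vector `u` (here `u = z₁`), then the first
and last columns of `J` are `a` and `b` times the single column `((A_e)ᵢ₁ (zᵢ · u))ᵢ`. -/

open scoped Kronecker

variable {m n ι R : Type*}

/-- The block-diagonal matrix whose `i`-th diagonal block is the row vector `z i`, with columns
indexed by pairs (block, position in the block). It extends `Dmat` to arbitrary index types and
coefficients. -/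
def rowBlockDiagonal [DecidableEq m] [Zero R] (z : m → ι → R) : Matrix m (m × ι) R :=
  Matrix.of fun i p => if p.1 = i then z i p.2 else 0

section Entries

variable [Fintype m] [DecidableEq m] [Fintype ι]

theorem rowBlockDiagonal_mul_apply [NonUnitalNonAssocSemiring R] (z : m → ι → R)
    (M : Matrix (m × ι) n R) (i : m) (j : n) :
    (rowBlockDiagonal z * M) i j = z i ⬝ᵥ fun l => M (i, l) j := by
  simp [rowBlockDiagonal, mul_apply, dotProduct, Fintype.sum_prod_type_right]

theorem mul_rowBlockDiagonal_transpose_apply [NonUnitalNonAssocSemiring R] (M : Matrix n (m × ι) R)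
    (z : m → ι → R) (i : n) (j : m) :
    (M * (rowBlockDiagonal z)ᵀ) i j = (fun l => M i (j, l)) ⬝ᵥ z j := by
  simp [rowBlockDiagonal, mul_apply, dotProduct, Fintype.sum_prod_type_right]

theorem rowBlockDiagonal_mul_kronecker_one_mul_transpose_apply [Fintype n] [DecidableEq n]
    [DecidableEq ι] [CommSemiring R] (A : Matrix m n R) (z : m → ι → R) (w : n → ι → R)
    (i : m) (j : n) :
    (rowBlockDiagonal z * (A ⊗ₖ (1 : Matrix ι ι R)) * (rowBlockDiagonal w)ᵀ) i j =
      A i j * (z i ⬝ᵥ w j) := by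
  have block_product (l : ι) :
      (rowBlockDiagonal z * (A ⊗ₖ (1 : Matrix ι ι R))) i (j, l) = A i j * z i l := by
    simp [rowBlockDiagonal_mul_apply, dotProduct, one_apply, mul_comm]
  simp only [mul_rowBlockDiagonal_transpose_apply, block_product, dotProduct, Finset.mul_sum,
    mul_assoc]

end Entries

section Determinant

variable [Fintype n] [DecidableEq n] [CommRing R] {j k : n} {a b : R}

theorem det_eq_zero_of_col_eq_smul {M : Matrix n n R} {v : n → R} (hjk : j ≠ k)
    (hj : M.col j = a • v) (hk : M.col k = b • v) : M.det = 0 := by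
  let N := M.updateCol j v
  have hNk : N.col k = b • v := by
    ext i
    simpa [N, hjk.symm] using congrFun hk i
  have repeated_col : (N.updateCol k v).det = 0 :=
    det_zero_of_column_eq hjk fun i => by simp [N, hjk]
  calc
    M.det = (M.updateCol j (a • v)).det := by rw [← hj, col_apply', updateCol_eq_self]
    _ = a * N.det := det_updateCol_smul M j a v
    _ = a * (N.updateCol k (b • v)).det := by rw [← hNk, col_apply', updateCol_eq_self]
    _ = a * (b * (N.updateCol k v).det) := by rw [det_updateCol_smul]
    _ = 0 := by rw [repeated_col, mul_zero, mul_zero]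

theorem jacobian_singular_on_S_general [Fintype ι] [DecidableEq ι] {A : Matrix n n R}
    (hjk : j ≠ k) (hA : A.col j = A.col k) (z : n → ι → R) {z' : n → ι → R} {u : ι → R}
    (hj : z' j = a • u) (hk : z' k = b • u) :
    (rowBlockDiagonal z * (A ⊗ₖ (1 : Matrix ι ι R)) * (rowBlockDiagonal z')ᵀ).det = 0 := by
  refine det_eq_zero_of_col_eq_smul (a := a) (b := b) (v := fun i => A i j * (z i ⬝ᵥ u)) hjk ?_ ?_
  · ext i
    simp [rowBlockDiagonal_mul_kronecker_one_mul_transpose_apply, hj, mul_left_comm]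
  · ext i
    have hAi : A i j = A i k := congrFun hA i
    simp [rowBlockDiagonal_mul_kronecker_one_mul_transpose_apply, hk, hAi, mul_left_comm]

end Determinant

theorem Ae_col_zero_eq_col_four : Ae.col 0 = Ae.col 4 := by
  ext i
  fin_cases i <;> rfl

/-- If `z'₁ = a·z₁` and `z'₅ = b·z₁` (as happens at frameworks where `z₅` is parallel
to `z₁`), then the 5×5 matrix `J = D(z)·A_e^{(2)}·D(z')ᵀ` is singular: the Jacobian
of the 2-cycles dynamics is degenerate at frameworks with `z₁` parallel to `z₅`. -/
theorem jacobian_singular_on_S (z z' : Fin 5 → Fin 2 → ℝ) (a b : ℝ)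
    (h1 : z' 0 = a • z 0) (h5 : z' 4 = b • z 0) :
    (Dmat z * Ae2 * (Dmat z')ᵀ).det = 0 :=
  jacobian_singular_on_S_general (by decide) Ae_col_zero_eq_col_four z h1 h5
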